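/- Let S be a stable matching in G* with level partitions A = A_0 ∪ ⋯ ∪ A_{n0−1} and B = B_0 ∪ ⋯ ∪ B_{n0−1}. Then for every i and every edge (a,b) ∈ E with a ∈ A_{i+1} and b ∈ B_i, one has wt_{S'}(a,b) = −2, i.e., both a and b are matched in S' and prefer their partners in S' to each other. -/

import Mathlib

open Classical

noncomputable section

namespace PopMax

/-- A bipartite preference instance `G = (A ∪ B, E)`:
`E a b` says there is an edge between `a ∈ A` and `b ∈ B`;
`prefA a b b'` says `a` strictly prefers `b` to `b'`;
`prefB b a a'` says `b` strictly prefers `a` to `a'`. -/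
structure PrefSys (A : Type*) (B : Type*) where
  E : A → B → Prop
  prefA : A → B → B → Prop
  prefB : B → A → A → Prop

/-- Every node has a strict (linear) preference order over its neighbors. -/
def PrefSys.IsValid {A B : Type*} (I : PrefSys A B) : Prop :=
  (∀ a b, ¬ I.prefA a b b) ∧
  (∀ a b₁ b₂ b₃, I.prefA a b₁ b₂ → I.prefA a b₂ b₃ → I.prefA a b₁ b₃) ∧
  (∀ a b₁ b₂, I.E a b₁ → I.E a b₂ → b₁ ≠ b₂ → I.prefA a b₁ b₂ ∨ I.prefA a b₂ b₁) ∧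
  (∀ b a, ¬ I.prefB b a a) ∧
  (∀ b a₁ a₂ a₃, I.prefB b a₁ a₂ → I.prefB b a₂ a₃ → I.prefB b a₁ a₃) ∧
  (∀ b a₁ a₂, I.E a₁ b → I.E a₂ b → a₁ ≠ a₂ → I.prefB b a₁ a₂ ∨ I.prefB b a₂ a₁)

variable {A B : Type*}

/-- A matching: a set of pairwise disjoint edges. -/
def IsMatching (I : PrefSys A B) (M : Finset (A × B)) : Prop :=
  (∀ p ∈ M, I.E p.1 p.2) ∧
  (∀ p ∈ M, ∀ q ∈ M, p.1 = q.1 → p = q) ∧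
  (∀ p ∈ M, ∀ q ∈ M, p.2 = q.2 → p = q)

def matchedA (M : Finset (A × B)) (a : A) : Prop := ∃ b, (a, b) ∈ M
def matchedB (M : Finset (A × B)) (b : B) : Prop := ∃ a, (a, b) ∈ M

/-- A maximum matching: a matching of maximum cardinality. -/
def IsMaximumMatching (I : PrefSys A B) (M : Finset (A × B)) : Prop :=
  IsMatching I M ∧ ∀ N : Finset (A × B), IsMatching I N → N.card ≤ M.card

/-- A perfect matching matches all nodes. -/
def IsPerfectMatching (I : PrefSys A B) (M : Finset (A × B)) : Prop :=
  IsMatching I M ∧ (∀ a, matchedA M a) ∧ (∀ b, matchedB M b)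

/-- `a ∈ A` prefers matching `M` to matching `N`. -/
def prefersA (I : PrefSys A B) (a : A) (M N : Finset (A × B)) : Prop :=
  ∃ b, (a, b) ∈ M ∧ (¬ matchedA N a ∨ ∃ b', (a, b') ∈ N ∧ I.prefA a b b')

/-- `b ∈ B` prefers matching `M` to matching `N`. -/
def prefersB (I : PrefSys A B) (b : B) (M N : Finset (A × B)) : Prop :=
  ∃ a, (a, b) ∈ M ∧ (¬ matchedB N b ∨ ∃ a', (a', b) ∈ N ∧ I.prefB b a a')

/-- A node `u ∈ A ∪ B` prefers matching `M` to matching `N`. -/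
def prefers (I : PrefSys A B) (u : A ⊕ B) (M N : Finset (A × B)) : Prop :=
  match u with
  | Sum.inl a => prefersA I a M N
  | Sum.inr b => prefersB I b M N

/-- `φ(M,N)`: the number of nodes preferring `M` to `N`. -/
def phi [Fintype A] [Fintype B] (I : PrefSys A B) (M N : Finset (A × B)) : ℕ :=
  (Finset.univ.filter (fun u : A ⊕ B => prefers I u M N)).card

/-- `Δ(M,N) = φ(M,N) − φ(N,M)`. -/
def Delta [Fintype A] [Fintype B] (I : PrefSys A B) (M N : Finset (A × B)) : ℤ :=
  (phi I M N : ℤ) - (phi I N M : ℤ)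

/-- A popular max-matching: a maximum matching `M` with `Δ(M,N) ≥ 0`
for every maximum matching `N`. -/
def IsPopularMaxMatching [Fintype A] [Fintype B] (I : PrefSys A B)
    (M : Finset (A × B)) : Prop :=
  IsMaximumMatching I M ∧
    ∀ N : Finset (A × B), IsMaximumMatching I N → 0 ≤ Delta I M N

/-- The edge `(a,b) ∉ M` blocks `M`. -/
def Blocks (I : PrefSys A B) (M : Finset (A × B)) (a : A) (b : B) : Prop :=
  I.E a b ∧ (a, b) ∉ M ∧
  (¬ matchedA M a ∨ ∃ b', (a, b') ∈ M ∧ I.prefA a b b') ∧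
  (¬ matchedB M b ∨ ∃ a', (a', b) ∈ M ∧ I.prefB b a a')

/-- A stable matching: a matching with no blocking edge. -/
def IsStable (I : PrefSys A B) (S : Finset (A × B)) : Prop :=
  IsMatching I S ∧ ∀ a b, ¬ Blocks I S a b

/-- The edge weight `wt_M(a,b) ∈ {0, ±2}`. -/
def wt (I : PrefSys A B) (M : Finset (A × B)) (a : A) (b : B) : ℤ :=
  if Blocks I M a b then 2
  else if (∃ b', (a, b') ∈ M ∧ I.prefA a b' b) ∧ (∃ a', (a', b) ∈ M ∧ I.prefB b a' a) then -2
  else 0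

/-- The underlying simple graph on the node set `A ⊕ B`. -/
def graphOf (I : PrefSys A B) : SimpleGraph (A ⊕ B) :=
  SimpleGraph.fromRel (fun u w =>
    match u, w with
    | Sum.inl a, Sum.inr b => I.E a b
    | _, _ => False)

/-- The (undirected) edge `e` is an edge of the matching `M`. -/
def edgeInM (M : Finset (A × B)) (e : Sym2 (A ⊕ B)) : Prop :=
  ∃ a b, (a, b) ∈ M ∧ e = s(Sum.inl a, Sum.inr b)

/-- Consecutive edges alternate between `M` and `E ∖ M`. -/
def altRel (M : Finset (A × B)) (e f : Sym2 (A ⊕ B)) : Prop :=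
  edgeInM M e ↔ ¬ edgeInM M f

/-- An alternating path with respect to `M`. -/
def IsAltPath (I : PrefSys A B) (M : Finset (A × B)) {u w : A ⊕ B}
    (p : (graphOf I).Walk u w) : Prop :=
  p.IsPath ∧ List.Chain' (altRel M) p.edges

/-- An alternating cycle with respect to `M` (alternation also across the wrap-around). -/
def IsAltCycle (I : PrefSys A B) (M : Finset (A × B)) {w : A ⊕ B}
    (c : (graphOf I).Walk w w) : Prop :=
  c.IsCycle ∧ List.Chain' (altRel M) (c.edges ++ c.edges.take 1)

/-- `wt_M` as a function on undirected edges. -/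
def wtSym (I : PrefSys A B) (M : Finset (A × B)) : Sym2 (A ⊕ B) → ℤ :=
  Sym2.lift ⟨fun u w =>
      match u, w with
      | Sum.inl a, Sum.inr b => wt I M a b
      | Sum.inr b, Sum.inl a => wt I M a b
      | _, _ => 0,
    by rintro (a | b) (a' | b') <;> rfl⟩

/-- `wt_M(ρ) = Σ_{e ∈ ρ} wt_M(e)` for a walk `ρ`. -/
def wtWalk (I : PrefSys A B) (M : Finset (A × B)) {u w : A ⊕ B}
    (p : (graphOf I).Walk u w) : ℤ :=
  (p.edges.map (wtSym I M)).sum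

/-- The node `u ∈ A ∪ B` is unmatched in `M`. -/
def unmatchedNode (M : Finset (A × B)) : A ⊕ B → Prop
  | Sum.inl a => ¬ matchedA M a
  | Sum.inr b => ¬ matchedB M b

/-- The set of edges `(a,b) ∈ A × B` used by the walk `p`. -/
def pairsOf [Fintype A] [Fintype B] (I : PrefSys A B) {u w : A ⊕ B}
    (p : (graphOf I).Walk u w) : Finset (A × B) :=
  Finset.univ.filter (fun ab : A × B => s(Sum.inl ab.1, Sum.inr ab.2) ∈ p.edges)

/-- `M` is Pareto-optimal: no matching `N` has `φ(N,M) > 0` and `φ(M,N) = 0`. -/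
def IsParetoOptimal [Fintype A] [Fintype B] (I : PrefSys A B) (M : Finset (A × B)) : Prop :=
  ¬ ∃ N : Finset (A × B), IsMatching I N ∧ 0 < phi I N M ∧ phi I M N = 0

/-! ### The auxiliary instance `G*` -/

/-- `A* = {a_0, …, a_{n0−1} : a ∈ A}` where `n0 = |A|`. -/
abbrev AStar (A : Type*) [Fintype A] : Type _ := A × Fin (Fintype.card A)

/-- `B* = B̃ ∪ {d_1(a), …, d_{n0−1}(a) : a ∈ A}`; the dummy node `(a, j)`
(with `j : Fin (n0 − 1)`) stands for `d_{j+1}(a)`. -/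
abbrev BStar (A : Type*) (B : Type*) [Fintype A] : Type _ :=
  B ⊕ (A × Fin (Fintype.card A - 1))

/-- The auxiliary instance `G*` with its edges and preferences. -/
def starSys [Fintype A] (I : PrefSys A B) : PrefSys (AStar A) (BStar A B) where
  E := fun ai w =>
    match ai, w with
    | (a, _i), Sum.inl b => I.E a b
    | (a, i), Sum.inr (a', j) => a = a' ∧ ((i : ℕ) = (j : ℕ) ∨ (i : ℕ) = (j : ℕ) + 1)
  prefA := fun ai u v =>
    match ai, u, v with
    | (a, _i), Sum.inl b, Sum.inl b' => I.prefA a b b'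
    | (a, i), Sum.inl _b, Sum.inr (a', j) => a = a' ∧ (j : ℕ) = (i : ℕ)
    | (a, i), Sum.inr (a', j), Sum.inl _b => a = a' ∧ (j : ℕ) + 1 = (i : ℕ)
    | (a, i), Sum.inr (a', j), Sum.inr (a'', j') =>
        a = a' ∧ a = a'' ∧ (j : ℕ) + 1 = (i : ℕ) ∧ (j' : ℕ) = (i : ℕ)
  prefB := fun w x y =>
    match w, x, y with
    | Sum.inl b, (a, i), (a', i') =>
        (i' : ℕ) < (i : ℕ) ∨ ((i : ℕ) = (i' : ℕ) ∧ I.prefB b a a')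
    | Sum.inr (a, j), (a', i), (a'', i') =>
        a' = a ∧ a'' = a ∧ (i : ℕ) = (j : ℕ) ∧ (i' : ℕ) = (j : ℕ) + 1

/-- The projection `S ↦ S'`: delete edges incident to dummy nodes and replace
`(a_i, b̃)` by `(a, b)`. -/
def proj [Fintype A] [Fintype B] (S : Finset (AStar A × BStar A B)) : Finset (A × B) :=
  Finset.univ.filter (fun ab : A × B =>
    ∃ i : Fin (Fintype.card A), ((ab.1, i), (Sum.inl ab.2 : BStar A B)) ∈ S)

/-- `a ∈ A_i` for the level partition of `A` induced by a (stable) matching `S` in `G*`: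
for `i ≤ n0 − 2`, `a ∈ A_i` iff `(a_i, b̃) ∈ S` for some `b̃ ∈ B̃`;
`A_{n0−1}` consists of all remaining nodes of `A`. -/
def AtLevelA [Fintype A] (S : Finset (AStar A × BStar A B)) (a : A) (i : ℕ) : Prop :=
  (i + 1 < Fintype.card A ∧
     ∃ j : Fin (Fintype.card A), (j : ℕ) = i ∧
       ∃ b : B, ((a, j), (Sum.inl b : BStar A B)) ∈ S) ∨
  (i + 1 = Fintype.card A ∧
     ∀ j : Fin (Fintype.card A), (j : ℕ) + 1 < Fintype.card A →
       ∀ b : B, ((a, j), (Sum.inl b : BStar A B)) ∉ S)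

/-- `b ∈ B_i` for the level partition of `B` induced by a (stable) matching `S` in `G*`:
for `1 ≤ i ≤ n0 − 1`, `b ∈ B_i` iff `(a_i, b̃) ∈ S` for some `a ∈ A_i`;
`B_0` consists of all remaining nodes of `B`. -/
def AtLevelB [Fintype A] (S : Finset (AStar A × BStar A B)) (b : B) (i : ℕ) : Prop :=
  (1 ≤ i ∧ i < Fintype.card A ∧
     ∃ j : Fin (Fintype.card A), (j : ℕ) = i ∧
       ∃ a : A, AtLevelA S a i ∧ ((a, j), (Sum.inl b : BStar A B)) ∈ S) ∨
  (i = 0 ∧ ∀ j : Fin (Fintype.card A), 1 ≤ (j : ℕ) →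
       ∀ a : A, AtLevelA S a (j : ℕ) → ((a, j), (Sum.inl b : BStar A B)) ∉ S)

/-!
For each `a`, stability matches every dummy `d_{j+1}(a)` to `a_j` or to `a_{j+1}`, and these choices
switch at most once as `j` grows, from `a_j` to `a_{j+1}`. Hence at most one copy of `a` is matched
into `B̃`, and `a ∈ A_{i+1}` forces `a_i` to be matched to its last choice `d_{i+1}(a)`.
As `(a_i, b̃)` does not block `S`, `b̃` has a better partner than `a_i`, which for `b ∈ B_i` is a
copy `a'_i` of some `a'` that `b` prefers to `a`. As `b̃` prefers `a_{i+1}` to `a'_i` and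
`(a_{i+1}, b̃)` does not block `S`, `a_{i+1}` has a better partner than `b̃`. This is not
`d_{i+1}(a)`, which is matched to `a_i`, so it is some `b̃'` with `a` preferring `b'` to `b`.
-/

theorem PrefSys.IsValid.prefA_total {I : PrefSys A B} (hI : I.IsValid) {a : A} {b₁ b₂ : B}
    (h₁ : I.E a b₁) (h₂ : I.E a b₂) (hne : b₁ ≠ b₂) : I.prefA a b₁ b₂ ∨ I.prefA a b₂ b₁ :=
  hI.2.2.1 a b₁ b₂ h₁ h₂ hne

theorem PrefSys.IsValid.prefB_total {I : PrefSys A B} (hI : I.IsValid) {b : B} {a₁ a₂ : A}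
    (h₁ : I.E a₁ b) (h₂ : I.E a₂ b) (hne : a₁ ≠ a₂) : I.prefB b a₁ a₂ ∨ I.prefB b a₂ a₁ :=
  hI.2.2.2.2.2 b a₁ a₂ h₁ h₂ hne

theorem PrefSys.IsValid.prefB_asymm {I : PrefSys A B} (hI : I.IsValid) {b : B} {a₁ a₂ : A}
    (h : I.prefB b a₁ a₂) : ¬ I.prefB b a₂ a₁ :=
  fun h' => hI.2.2.2.1 b a₁ (hI.2.2.2.2.1 b a₁ a₂ a₁ h h')

theorem IsMatching.eq_of_mem_left {I : PrefSys A B} {M : Finset (A × B)} (hM : IsMatching I M)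
    {a : A} {b b' : B} (h : (a, b) ∈ M) (h' : (a, b') ∈ M) : b = b' :=
  congrArg Prod.snd (hM.2.1 _ h _ h' rfl)

theorem IsMatching.eq_of_mem_right {I : PrefSys A B} {M : Finset (A × B)} (hM : IsMatching I M)
    {a a' : A} {b : B} (h : (a, b) ∈ M) (h' : (a', b) ∈ M) : a = a' :=
  congrArg Prod.fst (hM.2.2 _ h _ h' rfl)

theorem IsStable.exists_prefA_or_exists_prefB {I : PrefSys A B} (hI : I.IsValid)
    {M : Finset (A × B)} (hM : IsStable I M) {a : A} {b : B} (hab : I.E a b) (hnot : (a, b) ∉ M) :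
    (∃ b', (a, b') ∈ M ∧ I.prefA a b' b) ∨ ∃ a', (a', b) ∈ M ∧ I.prefB b a' a := by
  by_contra! ⟨hA, hB⟩
  refine hM.2 a b ⟨hab, hnot, or_iff_not_imp_left.2 fun ha => ?_,
    or_iff_not_imp_left.2 fun hb => ?_⟩
  · obtain ⟨b', hb'⟩ := not_not.1 ha
    have hne : b ≠ b' := fun h => hnot (h ▸ hb')
    exact ⟨b', hb', (hI.prefA_total hab (hM.1.1 _ hb') hne).resolve_right (hA b' hb')⟩
  · obtain ⟨a', ha'⟩ := not_not.1 hb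
    have hne : a ≠ a' := fun h => hnot (h ▸ ha')
    exact ⟨a', ha', (hI.prefB_total hab (hM.1.1 _ ha') hne).resolve_right (hB a' ha')⟩

theorem wt_eq_neg_two {I : PrefSys A B} (hI : I.IsValid) {M : Finset (A × B)}
    (hM : IsMatching I M) {a : A} {b : B} (hA : ∃ b', (a, b') ∈ M ∧ I.prefA a b' b)
    (hB : ∃ a', (a', b) ∈ M ∧ I.prefB b a' a) : wt I M a b = -2 := by
  have hnotBlocks : ¬ Blocks I M a b := by
    obtain ⟨a', ha', hpref⟩ := hB
    rintro ⟨-, -, -, hunmatched | ⟨a'', ha'', hpref'⟩⟩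
    · exact hunmatched ⟨a', ha'⟩
    · obtain rfl := hM.eq_of_mem_right ha' ha''
      exact hI.prefB_asymm hpref hpref'
  rw [wt, if_neg hnotBlocks, if_pos ⟨hA, hB⟩]

section Star

variable [Fintype A] {I : PrefSys A B} {S : Finset (AStar A × BStar A B)}

/-- The copy `a_j` of `a`, which is the first choice of the dummy `d_{j+1}(a)` and has it as its
last choice. Here `d_{j+1}(a)` is encoded as `Sum.inr (a, j)`. -/
def lowerCopy (a : A) (j : Fin (Fintype.card A - 1)) : AStar A :=
  (a, ⟨j, j.isLt.trans_le (Nat.sub_le _ _)⟩)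

/-- The copy `a_{j+1}` of `a`, which is the last choice of the dummy `d_{j+1}(a)` and has it as its
first choice. Here `d_{j+1}(a)` is encoded as `Sum.inr (a, j)`. -/
def upperCopy (a : A) (j : Fin (Fintype.card A - 1)) : AStar A :=
  (a, ⟨j + 1, Nat.add_lt_of_lt_sub j.isLt⟩)

theorem lowerCopy_ne_upperCopy (a : A) (j : Fin (Fintype.card A - 1)) :
    lowerCopy a j ≠ upperCopy a j := by
  simp [lowerCopy, upperCopy]

theorem upperCopy_eq_lowerCopy (a : A) {j k : Fin (Fintype.card A - 1)}
    (hjk : (j : ℕ) + 1 = k) : upperCopy a j = lowerCopy a k :=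
  Prod.ext rfl (Fin.ext hjk)

theorem starSys_isValid (hI : I.IsValid) : (starSys I).IsValid := by
  obtain ⟨irreflA, transA, totalA, irreflB, transB, totalB⟩ := hI
  refine ⟨?_, ?_, ?_, ?_, ?_, ?_⟩
  · rintro ⟨a, i⟩ (b | ⟨a', j⟩) <;> simp only [starSys] <;> grind
  · rintro ⟨a, i⟩ (b₁ | ⟨a₁, j₁⟩) (b₂ | ⟨a₂, j₂⟩) (b₃ | ⟨a₃, j₃⟩) <;> simp only [starSys] <;> grind
  · rintro ⟨a, i⟩ (b₁ | ⟨a₁, j₁⟩) (b₂ | ⟨a₂, j₂⟩) <;> simp only [starSys] <;> grind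
  · rintro (b | ⟨a', j⟩) ⟨a, i⟩ <;> simp only [starSys] <;> grind
  · rintro (b | ⟨a, j⟩) ⟨a₁, i₁⟩ ⟨a₂, i₂⟩ ⟨a₃, i₃⟩ <;> simp only [starSys] <;> grind
  · rintro (b | ⟨a, j⟩) ⟨a₁, i₁⟩ ⟨a₂, i₂⟩ <;> simp only [starSys] <;> grind

theorem starSys_E_inl (x : AStar A) (b : B) : (starSys I).E x (Sum.inl b) ↔ I.E x.1 b :=
  Iff.rfl

theorem starSys_E_lowerCopy_dummy (a : A) (j : Fin (Fintype.card A - 1)) :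
    (starSys I).E (lowerCopy a j) (Sum.inr (a, j)) :=
  ⟨rfl, Or.inl rfl⟩

theorem starSys_E_upperCopy_dummy (a : A) (j : Fin (Fintype.card A - 1)) :
    (starSys I).E (upperCopy a j) (Sum.inr (a, j)) :=
  ⟨rfl, Or.inr rfl⟩

theorem not_prefA_upperCopy_dummy (a : A) (j : Fin (Fintype.card A - 1)) (w : BStar A B) :
    ¬ (starSys I).prefA (upperCopy a j) w (Sum.inr (a, j)) := by
  rcases w with b | ⟨a', j'⟩ <;> simp [starSys, upperCopy]

theorem not_prefA_lowerCopy_dummy_inl (a : A) (j : Fin (Fintype.card A - 1)) (b : B) :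
    ¬ (starSys I).prefA (lowerCopy a j) (Sum.inr (a, j)) (Sum.inl b) := by
  simp [starSys, lowerCopy]

theorem not_prefB_dummy_lowerCopy (a : A) (j : Fin (Fintype.card A - 1)) (x : AStar A) :
    ¬ (starSys I).prefB (Sum.inr (a, j)) x (lowerCopy a j) := by
  simp [starSys, lowerCopy]

theorem eq_lowerCopy_of_prefB_dummy_upperCopy {a : A} {j : Fin (Fintype.card A - 1)} {x : AStar A}
    (h : (starSys I).prefB (Sum.inr (a, j)) x (upperCopy a j)) : x = lowerCopy a j :=
  Prod.ext h.1 (Fin.ext h.2.2.1)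

theorem eq_inl_or_eq_dummy_of_prefA_lowerCopy_dummy {a : A} {j : Fin (Fintype.card A - 1)}
    {w : BStar A B} (h : (starSys I).prefA (lowerCopy a j) w (Sum.inr (a, j))) :
    (∃ b, w = Sum.inl b) ∨
      ∃ k : Fin (Fintype.card A - 1), (k : ℕ) + 1 = j ∧ w = Sum.inr (a, k) := by
  rcases w with b | ⟨a', k⟩
  · exact Or.inl ⟨b, rfl⟩
  · obtain ⟨rfl, -, hk, -⟩ := h
    exact Or.inr ⟨k, hk, rfl⟩

theorem eq_inl_or_eq_dummy_of_prefA_upperCopy_inl {a : A} {j : Fin (Fintype.card A - 1)}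
    {w : BStar A B} {b : B} (h : (starSys I).prefA (upperCopy a j) w (Sum.inl b)) :
    (∃ b', w = Sum.inl b' ∧ I.prefA a b' b) ∨ w = Sum.inr (a, j) := by
  rcases w with b' | ⟨a', k⟩
  · exact Or.inl ⟨b', rfl, h⟩
  · obtain ⟨rfl, hk⟩ := h
    obtain rfl : k = j := Fin.ext (Nat.succ_injective hk)
    exact Or.inr rfl

theorem lowerCopy_dummy_mem_or_upperCopy_dummy_mem (hI : I.IsValid) (hS : IsStable (starSys I) S)
    (a : A) (j : Fin (Fintype.card A - 1)) :
    (lowerCopy a j, Sum.inr (a, j)) ∈ S ∨ (upperCopy a j, Sum.inr (a, j)) ∈ S := by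
  refine or_iff_not_imp_right.2 fun hnot => ?_
  rcases hS.exists_prefA_or_exists_prefB (starSys_isValid hI)
    (starSys_E_upperCopy_dummy a j) hnot with ⟨w, -, hw⟩ | ⟨x, hx, hpref⟩
  · exact absurd hw (not_prefA_upperCopy_dummy a j w)
  · exact eq_lowerCopy_of_prefB_dummy_upperCopy hpref ▸ hx

theorem lowerCopy_dummy_mem_of_upperCopy_inl_mem (hI : I.IsValid) (hS : IsStable (starSys I) S)
    {a : A} {j : Fin (Fintype.card A - 1)} {b : B} (h : (upperCopy a j, Sum.inl b) ∈ S) :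
    (lowerCopy a j, Sum.inr (a, j)) ∈ S :=
  (lowerCopy_dummy_mem_or_upperCopy_dummy_mem hI hS a j).resolve_right fun hup =>
    Sum.inl_ne_inr (hS.1.eq_of_mem_left h hup)

theorem lowerCopy_dummy_mem_of_le (hI : I.IsValid) (hS : IsStable (starSys I) S) {a : A}
    {j k : Fin (Fintype.card A - 1)} (hjk : j ≤ k) (hk : (lowerCopy a k, Sum.inr (a, k)) ∈ S) :
    (lowerCopy a j, Sum.inr (a, j)) ∈ S := by
  obtain ⟨k, hk_lt⟩ := k
  induction k with
  | zero => rwa [show j = ⟨0, hk_lt⟩ from Fin.ext (Nat.le_zero.1 hjk)]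
  | succ k ih =>
    rcases hjk.eq_or_lt with rfl | hlt
    · exact hk
    let pred : Fin (Fintype.card A - 1) := ⟨k, (Nat.lt_succ_self k).trans hk_lt⟩
    refine ih pred.isLt (Nat.le_of_lt_succ hlt)
      ((lowerCopy_dummy_mem_or_upperCopy_dummy_mem hI hS a pred).resolve_right fun hup => ?_)
    rw [upperCopy_eq_lowerCopy a (k := ⟨k + 1, hk_lt⟩) rfl] at hup
    simpa [pred] using hS.1.eq_of_mem_left hk hup

theorem not_lt_of_inl_mem (hI : I.IsValid) (hS : IsStable (starSys I) S) {a : A}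
    {i k : Fin (Fintype.card A)} {b c : B} (hi : ((a, i), Sum.inl b) ∈ S)
    (hk : ((a, k), Sum.inl c) ∈ S) : ¬ i < k := by
  intro hik
  let low : Fin (Fintype.card A - 1) := ⟨i, by omega⟩
  let high : Fin (Fintype.card A - 1) := ⟨k - 1, by omega⟩
  have hhigh : upperCopy a high = (a, k) :=
    Prod.ext rfl (Fin.ext (Nat.sub_add_cancel (Nat.one_le_of_lt hik)))
  have hle : low ≤ high := Nat.le_sub_one_of_lt hik
  have hlow : (lowerCopy a low, Sum.inr (a, low)) ∈ S :=
    lowerCopy_dummy_mem_of_le hI hS hle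
      (lowerCopy_dummy_mem_of_upperCopy_inl_mem hI hS (hhigh ▸ hk))
  exact Sum.inl_ne_inr (hS.1.eq_of_mem_left hi hlow)

theorem index_eq_of_inl_mem (hI : I.IsValid) (hS : IsStable (starSys I) S) {a : A}
    {i k : Fin (Fintype.card A)} {b c : B} (hi : ((a, i), Sum.inl b) ∈ S)
    (hk : ((a, k), Sum.inl c) ∈ S) : i = k :=
  le_antisymm (not_lt.1 (not_lt_of_inl_mem hI hS hk hi))
    (not_lt.1 (not_lt_of_inl_mem hI hS hi hk))

theorem lowerCopy_dummy_mem_of_forall_le_inl_notMem (hI : I.IsValid) (hS : IsStable (starSys I) S)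
    {a : A} (j : Fin (Fintype.card A - 1))
    (hinl : ∀ k ≤ j, ∀ b, (lowerCopy a k, Sum.inl b) ∉ S) :
    (lowerCopy a j, Sum.inr (a, j)) ∈ S := by
  induction j using WellFoundedLT.induction with
  | ind j ih =>
    by_contra hnot
    rcases hS.exists_prefA_or_exists_prefB (starSys_isValid hI)
      (starSys_E_lowerCopy_dummy a j) hnot with ⟨w, hw, hpref⟩ | ⟨x, -, hx⟩
    · rcases eq_inl_or_eq_dummy_of_prefA_lowerCopy_dummy hpref with ⟨b, rfl⟩ | ⟨k, hkj, rfl⟩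
      · exact hinl j le_rfl b hw
      · have hlt : k < j := Fin.lt_def.2 (by omega)
        have hk := ih k hlt fun l hl => hinl l (hl.trans hlt.le)
        rw [← upperCopy_eq_lowerCopy a hkj] at hw
        exact lowerCopy_ne_upperCopy a k (hS.1.eq_of_mem_right hk hw)
    · exact not_prefB_dummy_lowerCopy a j x hx

theorem AtLevelA.lt_card {a : A} {i : ℕ} (h : AtLevelA S a i) : i < Fintype.card A := by
  rcases h with ⟨h, -⟩ | ⟨h, -⟩ <;> omega

theorem atLevelA_of_inl_mem (hI : I.IsValid) (hS : IsStable (starSys I) S) {a : A}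
    {i : Fin (Fintype.card A)} {b : B} (h : ((a, i), Sum.inl b) ∈ S) : AtLevelA S a i := by
  rcases (Nat.succ_le_of_lt i.isLt).lt_or_eq with hi | hi
  · exact Or.inl ⟨hi, i, rfl, b, h⟩
  · refine Or.inr ⟨hi, fun k hk c hc => ?_⟩
    obtain rfl := index_eq_of_inl_mem hI hS h hc
    exact hk.ne hi

theorem AtLevelB.index_eq (hI : I.IsValid) (hS : IsStable (starSys I) S) {a : A} {b : B} {i : ℕ}
    {k : Fin (Fintype.card A)} (hb : AtLevelB S b i) (h : ((a, k), Sum.inl b) ∈ S) :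
    (k : ℕ) = i := by
  rcases hb with ⟨-, -, k', rfl, a', -, h'⟩ | ⟨rfl, hnot⟩
  · rw [(Prod.mk.inj (hS.1.eq_of_mem_right h h')).2]
  · by_contra hk
    exact hnot k (Nat.one_le_iff_ne_zero.2 hk) a (atLevelA_of_inl_mem hI hS h) h

theorem AtLevelA.lowerCopy_dummy_mem (hI : I.IsValid) (hS : IsStable (starSys I) S) {a : A}
    {j : Fin (Fintype.card A - 1)} (ha : AtLevelA S a (j + 1)) :
    (lowerCopy a j, Sum.inr (a, j)) ∈ S := by
  rcases ha with ⟨-, k, hk, b, hb⟩ | ⟨-, hnot⟩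
  · have hcopy : (a, k) = upperCopy a j := Prod.ext rfl (Fin.ext hk)
    exact lowerCopy_dummy_mem_of_upperCopy_inl_mem hI hS (hcopy ▸ hb)
  · exact lowerCopy_dummy_mem_of_forall_le_inl_notMem hI hS j fun k _ b =>
      hnot _ (Nat.add_lt_of_lt_sub k.isLt) b

theorem exists_lowerCopy_inl_mem_prefB (hI : I.IsValid) (hS : IsStable (starSys I) S) {a : A}
    {b : B} {j : Fin (Fintype.card A - 1)} (hab : I.E a b) (ha : AtLevelA S a (j + 1))
    (hb : AtLevelB S b j) : ∃ a', (lowerCopy a' j, Sum.inl b) ∈ S ∧ I.prefB b a' a := by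
  have hdummy := ha.lowerCopy_dummy_mem hI hS
  have hnot : (lowerCopy a j, Sum.inl b) ∉ S := fun h =>
    Sum.inl_ne_inr (hS.1.eq_of_mem_left h hdummy)
  rcases hS.exists_prefA_or_exists_prefB (starSys_isValid hI)
    ((starSys_E_inl _ b).2 hab) hnot with ⟨w, hw, hpref⟩ | ⟨⟨a', k⟩, hk, hpref⟩
  · obtain rfl := hS.1.eq_of_mem_left hdummy hw
    exact absurd hpref (not_prefA_lowerCopy_dummy_inl a j b)
  · have hkj : (k : ℕ) = j := hb.index_eq hI hS hk
    have hcopy : (a', k) = lowerCopy a' j := Prod.ext rfl (Fin.ext hkj)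
    exact ⟨a', hcopy ▸ hk, (hpref.resolve_left hkj.not_gt).2⟩

theorem exists_upperCopy_inl_mem_prefA (hI : I.IsValid) (hS : IsStable (starSys I) S)
    {a a' : A} {b : B} {j : Fin (Fintype.card A - 1)} (hab : I.E a b)
    (hdummy : (lowerCopy a j, Sum.inr (a, j)) ∈ S) (hb : (lowerCopy a' j, Sum.inl b) ∈ S) :
    ∃ b', (upperCopy a j, Sum.inl b') ∈ S ∧ I.prefA a b' b := by
  have hnot : (upperCopy a j, Sum.inl b) ∉ S := fun h => by
    simpa [lowerCopy, upperCopy] using hS.1.eq_of_mem_right h hb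
  rcases hS.exists_prefA_or_exists_prefB (starSys_isValid hI)
    ((starSys_E_inl _ b).2 hab) hnot with ⟨w, hw, hpref⟩ | ⟨x, hx, hpref⟩
  · rcases eq_inl_or_eq_dummy_of_prefA_upperCopy_inl hpref with ⟨b', rfl, hb'⟩ | rfl
    · exact ⟨b', hw, hb'⟩
    · exact absurd (hS.1.eq_of_mem_right hdummy hw) (lowerCopy_ne_upperCopy a j)
  · obtain rfl := hS.1.eq_of_mem_right hb hx
    simp [starSys, lowerCopy, upperCopy] at hpref

theorem mem_proj [Fintype B] {a : A} {b : B} :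
    (a, b) ∈ proj S ↔ ∃ i, ((a, i), Sum.inl b) ∈ S := by
  simp [proj]

theorem isMatching_proj [Fintype B] (hI : I.IsValid) (hS : IsStable (starSys I) S) :
    IsMatching I (proj S) := by
  refine ⟨?_, ?_, ?_⟩
  · rintro ⟨a, b⟩ h
    obtain ⟨i, hi⟩ := mem_proj.1 h
    exact hS.1.1 _ hi
  · rintro ⟨a, b⟩ h ⟨_, b'⟩ h' rfl
    obtain ⟨i, hi⟩ := mem_proj.1 h
    obtain ⟨k, hk⟩ := mem_proj.1 h'
    obtain rfl := index_eq_of_inl_mem hI hS hi hk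
    rw [Sum.inl_injective (hS.1.eq_of_mem_left hi hk)]
  · rintro ⟨a, b⟩ h ⟨a', _⟩ h' rfl
    obtain ⟨i, hi⟩ := mem_proj.1 h
    obtain ⟨k, hk⟩ := mem_proj.1 h'
    rw [(Prod.mk.inj (hS.1.eq_of_mem_right hi hk)).1]

end Star

/-- For a stable matching `S` in `G*` with level partitions as above:
every edge `(a,b) ∈ E` with `a ∈ A_{i+1}` and `b ∈ B_i` has `wt_{S'}(a,b) = −2`,
i.e., both `a` and `b` are matched in `S'` and prefer their partners in `S'`
to each other. -/
theorem stmt5 {A B : Type*} [Fintype A] [Fintype B] [DecidableEq A] [DecidableEq B]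
    (I : PrefSys A B) (hI : I.IsValid)
    (S : Finset (AStar A × BStar A B)) (hS : IsStable (starSys I) S) :
    ∀ (i : ℕ) (a : A) (b : B), I.E a b → AtLevelA S a (i + 1) → AtLevelB S b i →
      wt I (proj S) a b = -2 ∧
      (∃ b', (a, b') ∈ proj S ∧ I.prefA a b' b) ∧
      (∃ a', (a', b) ∈ proj S ∧ I.prefB b a' a) := by
  intro i a b hab ha hb
  obtain ⟨j, rfl⟩ : ∃ j : Fin (Fintype.card A - 1), (j : ℕ) = i :=
    ⟨⟨i, Nat.lt_sub_of_add_lt ha.lt_card⟩, rfl⟩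
  obtain ⟨a', ha', hprefB⟩ := exists_lowerCopy_inl_mem_prefB hI hS hab ha hb
  obtain ⟨b', hb', hprefA⟩ :=
    exists_upperCopy_inl_mem_prefA hI hS hab (ha.lowerCopy_dummy_mem hI hS) ha'
  have hA : ∃ b', (a, b') ∈ proj S ∧ I.prefA a b' b := ⟨b', mem_proj.2 ⟨_, hb'⟩, hprefA⟩
  have hB : ∃ a', (a', b) ∈ proj S ∧ I.prefB b a' a := ⟨a', mem_proj.2 ⟨_, ha'⟩, hprefB⟩
  exact ⟨wt_eq_neg_two hI (isMatching_proj hI hS) hA hB, hA, hB⟩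

end PopMax
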